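/- Let α ∈ (0,1) be irrational with Gauss iterates (α_n) and suppose the Brjuno sum B(α) is finite. Then for every fixed j ≥ 0, the products (∏_{i=j+1}^{l} α_i) · B(α_{l+1}) tend to 0 as l → ∞. -/

import Mathlib

/-!
Write `β_m = ∏_{i<m} α_i`. Since the Gauss iterates of `α_m` are `α_m, α_{m+1}, …`, the product
`β_m · B(α_m)` is exactly the `m`-th tail of the series defining `B(α)`
(`prod_mul_brjunoSum_gaussIter`), hence tends to `0`. For `l ≥ j` the product over
`j + 1 ≤ i ≤ l` is `β_{l+1} / β_{j+1}`, where `β_{j+1}` is a fixed nonzero number because every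
iterate of an irrational number is irrational.
-/

/-- The Gauss iterates `α₀ = α`, `α_{n+1} = 1/α_n - ⌊1/α_n⌋`. -/
noncomputable def gaussIter (α : ℝ) : ℕ → ℝ
  | 0 => α
  | n + 1 => Int.fract (1 / gaussIter α n)

/-- The Brjuno condition: convergence of the series `Σ_n (∏_{i<n} α_i) log(1/α_n)`. -/
def BrjunoCondition (α : ℝ) : Prop :=
  Summable fun n : ℕ =>
    (∏ i ∈ Finset.range n, gaussIter α i) * Real.log (1 / gaussIter α n)

/-- The Brjuno sum `B(α) = Σ_n (∏_{i<n} α_i) log(1/α_n)`. -/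
noncomputable def brjunoSum (α : ℝ) : ℝ :=
  ∑' n : ℕ, (∏ i ∈ Finset.range n, gaussIter α i) * Real.log (1 / gaussIter α n)

theorem gaussIter_gaussIter (α : ℝ) (m n : ℕ) :
    gaussIter (gaussIter α m) n = gaussIter α (n + m) := by
  induction n with
  | zero => simp [gaussIter]
  | succ n ih => rw [Nat.add_right_comm, gaussIter, gaussIter, ih]

theorem irrational_gaussIter {α : ℝ} (h : Irrational α) (n : ℕ) :
    Irrational (gaussIter α n) := by
  induction n with
  | zero => exact h
  | succ n ih =>
    rw [gaussIter, one_div, Int.fract]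
    exact (irrational_inv_iff.2 ih).sub_intCast _

/-- No summability is assumed: both sides are `0` if the series diverges. -/
theorem prod_mul_brjunoSum_gaussIter (α : ℝ) (m : ℕ) :
    (∏ i ∈ Finset.range m, gaussIter α i) * brjunoSum (gaussIter α m) =
      ∑' n : ℕ, (∏ i ∈ Finset.range (n + m), gaussIter α i) *
        Real.log (1 / gaussIter α (n + m)) := by
  rw [brjunoSum, ← tsum_mul_left]
  refine tsum_congr fun n => ?_
  rw [add_comm n m, Finset.prod_range_add, gaussIter_gaussIter, mul_assoc, add_comm n m]
  simp only [gaussIter_gaussIter, add_comm m]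

/-- For a Brjuno number, the weighted tails `(∏_{i=j+1}^{l} α_i) · B(α_{l+1})` of the
Brjuno series tend to zero. -/
theorem brjuno_tail_tendsto_zero
    (α : ℝ) (hα : α ∈ Set.Ioo (0 : ℝ) 1) (hirr : Irrational α)
    (hB : BrjunoCondition α) (j : ℕ) :
    Filter.Tendsto
      (fun l : ℕ => (∏ i ∈ Finset.Icc (j + 1) l, gaussIter α i) * brjunoSum (gaussIter α (l + 1)))
      Filter.atTop (nhds 0) := by
  have hC : ∏ i ∈ Finset.range (j + 1), gaussIter α i ≠ 0 :=
    Finset.prod_ne_zero_iff.2 fun i _ => (irrational_gaussIter hirr i).ne_zero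
  have htail : Filter.Tendsto
      (fun l : ℕ => (∏ i ∈ Finset.range (l + 1), gaussIter α i) *
        brjunoSum (gaussIter α (l + 1))) Filter.atTop (nhds 0) := by
    simp only [prod_mul_brjunoSum_gaussIter]
    exact (tendsto_sum_nat_add fun n : ℕ => (∏ i ∈ Finset.range n, gaussIter α i) *
      Real.log (1 / gaussIter α n)).comp (Filter.tendsto_add_atTop_nat 1)
  have hscaled := htail.const_mul (∏ i ∈ Finset.range (j + 1), gaussIter α i)⁻¹
  rw [mul_zero] at hscaled
  refine hscaled.congr' ?_
  filter_upwards [Filter.eventually_ge_atTop j] with l hl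
  have hsplit : (∏ i ∈ Finset.range (j + 1), gaussIter α i) *
      ∏ i ∈ Finset.Icc (j + 1) l, gaussIter α i =
        ∏ i ∈ Finset.range (l + 1), gaussIter α i := by
    rw [← Finset.prod_range_mul_prod_Ico _ (Nat.succ_le_succ hl)]
    rfl
  rw [← hsplit, mul_assoc, inv_mul_cancel_left₀ hC]
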